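/- Let m, d ∈ ℕ with m ≥ d ≥ 2 and N = m^d. Set C = 2^(23/12)·e^(1/6)/√(ln 2), K = ⌊((d−1)/2)·log₂ m⌋, δ_K = 2^(−K)·d/m, and D = 2·C·d·√(N/m)·( 5·(1 + √2/2)·√(2 ln 2) + √(ln(4e·m/d))·√2/(√2 − 1) ). Let P be a jittered sampling point set of N points in [0,1)^d. Then for all real ℓ ≥ 1, Pr[ D*(P) ≥ ℓ·D + N·δ_K ] ≤ 3.7 · 4^(−ℓ). -/

import Mathlib

open MeasureTheory ProbabilityTheory Real

noncomputable section

/-- The axis-aligned cube `∏_i [x_i/m, x_i/m + 1/m)` of the `m`-grid partition of `[0,1)^d`. -/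
def jitterCube (m d : ℕ) (x : Fin d → Fin m) : Set (Fin d → ℝ) :=
  Set.univ.pi fun i => Set.Ico ((x i : ℝ) / m) ((x i : ℝ) / m + 1 / m)

/-- The distribution of a jittered sampling point configuration: independently, one point
uniformly distributed in each of the `m^d` cubes. -/
def jitterMeasure (m d : ℕ) : Measure ((Fin d → Fin m) → (Fin d → ℝ)) :=
  Measure.pi fun x => ((m : ENNReal) ^ d) • volume.restrict (jitterCube m d x)

open scoped Classical in
/-- Signed (non-normalized) discrepancy `|P ∩ A| - N·λ(A)` with `N = m^d` of a point
configuration `P`. -/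
def jdisc (m d : ℕ) (P : (Fin d → Fin m) → (Fin d → ℝ)) (A : Set (Fin d → ℝ)) : ℝ :=
  ((Finset.univ.filter fun x => P x ∈ A).card : ℝ) - (m : ℝ) ^ d * (volume A).toReal

/-- The anchored box `[0,y) = ∏_i [0, y_i)`. -/
def anchoredBox (d : ℕ) (y : Fin d → ℝ) : Set (Fin d → ℝ) :=
  Set.univ.pi fun i => Set.Ico 0 (y i)

/-- The (non-normalized) star discrepancy `D*(P) = sup_{y ∈ [0,1)^d} |disc([0,y))|`. -/
def starDisc (m d : ℕ) (P : (Fin d → Fin m) → (Fin d → ℝ)) : ℝ :=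
  ⨆ y : {y : Fin d → ℝ // ∀ i, y i ∈ Set.Ico (0 : ℝ) 1}, |jdisc m d P (anchoredBox d y.1)|

/-- The expected star discrepancy of a jittered sampling point set of `m^d` points. -/
def expStarDisc (m d : ℕ) : ℝ :=
  ∫ P, starDisc m d P ∂(jitterMeasure m d)


/-- uniform probability measure on a cube -/
def cubeM (m d : ℕ) (x : Fin d → Fin m) : Measure (Fin d → ℝ) :=
  ((m : ENNReal) ^ d) • volume.restrict (jitterCube m d x)

lemma jitterMeasure_eq (m d : ℕ) : jitterMeasure m d = Measure.pi (cubeM m d) := rfl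

lemma measurableSet_cube (m d : ℕ) (x : Fin d → Fin m) : MeasurableSet (jitterCube m d x) :=
  MeasurableSet.univ_pi fun _ => measurableSet_Ico

lemma cubeM_prob (m d : ℕ) (hm : 0 < m) (x : Fin d → Fin m) :
    IsProbabilityMeasure (cubeM m d x) := by
  constructor
  have hm' : (0 : ℝ) < m := by exact_mod_cast hm
  simp only [cubeM, Measure.smul_apply, Measure.restrict_apply_univ, smul_eq_mul, jitterCube]
  rw [Real.volume_pi_Ico]
  simp only [add_sub_cancel_left, Finset.prod_const, Finset.card_univ, Fintype.card_fin]
  rw [← mul_pow, one_div, ENNReal.ofReal_inv_of_pos hm', ENNReal.ofReal_natCast,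
    ENNReal.mul_inv_cancel (by exact_mod_cast hm.ne') (ENNReal.natCast_ne_top m), one_pow]

lemma mem_cube_iff (m d : ℕ) (hm : 0 < m) (x : Fin d → Fin m) (p : Fin d → ℝ) :
    p ∈ jitterCube m d x ↔ ∀ i, ((x i : ℕ) : ℝ) ≤ p i * m ∧ p i * m < (x i : ℕ) + 1 := by
  have hm' : (0 : ℝ) < m := by exact_mod_cast hm
  simp only [jitterCube, Set.mem_univ_pi, Set.mem_Ico]
  refine forall_congr' fun i => ?_
  rw [div_le_iff₀ hm', ← add_div, lt_div_iff₀ hm']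

lemma cube_disj (m d : ℕ) (hm : 0 < m) : Pairwise (Function.onFun Disjoint (jitterCube m d)) := by
  intro x y hxy
  rw [Function.onFun, Set.disjoint_left]
  intro p hp hq
  rw [mem_cube_iff m d hm] at hp hq
  apply hxy
  funext i
  have h1 := hp i
  have h2 := hq i
  apply Fin.ext
  have a1 : ((x i : ℕ) : ℝ) < (y i : ℕ) + 1 := by linarith
  have a2 : ((y i : ℕ) : ℝ) < (x i : ℕ) + 1 := by linarith
  have b1 : (x i : ℕ) < (y i : ℕ) + 1 := by exact_mod_cast a1
  have b2 : (y i : ℕ) < (x i : ℕ) + 1 := by exact_mod_cast a2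
  omega

/-- the half-open unit cube -/
def unitC (d : ℕ) : Set (Fin d → ℝ) := Set.univ.pi fun _ => Set.Ico 0 1

lemma cube_cover (m d : ℕ) (hm : 0 < m) : unitC d ⊆ ⋃ x, jitterCube m d x := by
  intro p hp
  have hm' : (0 : ℝ) < m := by exact_mod_cast hm
  simp only [unitC, Set.mem_univ_pi, Set.mem_Ico] at hp
  rw [Set.mem_iUnion]
  have h0 : ∀ i, 0 ≤ p i * m := fun i => mul_nonneg (hp i).1 hm'.le
  have h1 : ∀ i, ⌊p i * m⌋₊ < m := fun i => by
    rw [Nat.floor_lt (h0 i)]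
    nlinarith [(hp i).2]
  refine ⟨fun i => ⟨⌊p i * m⌋₊, h1 i⟩, ?_⟩
  rw [mem_cube_iff m d hm]
  intro i
  exact ⟨Nat.floor_le (h0 i), Nat.lt_floor_add_one _⟩

lemma sum_cubeM (m d : ℕ) (hm : 0 < m) (A : Set (Fin d → ℝ)) (hA : MeasurableSet A)
    (hAu : A ⊆ unitC d) :
    ∑ x, (cubeM m d x).real A = (m : ℝ) ^ d * (volume A).toReal := by
  have hfin : ∀ x, volume (A ∩ jitterCube m d x) ≠ ⊤ := by
    intro x
    refine ((measure_mono Set.inter_subset_right).trans_lt ?_).ne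
    rw [jitterCube, Real.volume_pi_Ico]
    exact ENNReal.prod_lt_top (fun _ _ => ENNReal.ofReal_lt_top)
  have h1 : volume A = ∑ x, volume (A ∩ jitterCube m d x) := by
    conv_lhs => rw [← Set.inter_eq_left.2 (hAu.trans (cube_cover m d hm)), Set.inter_iUnion]
    rw [measure_iUnion _ (fun x => hA.inter (measurableSet_cube m d x)), tsum_fintype]
    intro x y hxy
    exact (cube_disj m d hm hxy).mono Set.inter_subset_right Set.inter_subset_right
  rw [h1, ENNReal.toReal_sum (fun x _ => hfin x), Finset.mul_sum]
  refine Finset.sum_congr rfl fun x _ => ?_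
  simp only [cubeM, Measure.real, Measure.smul_apply, smul_eq_mul, ENNReal.toReal_mul,
    ENNReal.toReal_pow, ENNReal.toReal_natCast, Measure.restrict_apply hA]

lemma jdisc_eq_sum (m d : ℕ) (hm : 0 < m) (A : Set (Fin d → ℝ)) (hA : MeasurableSet A)
    (hAu : A ⊆ unitC d) (P : (Fin d → Fin m) → (Fin d → ℝ)) :
    jdisc m d P A = ∑ x, (A.indicator 1 (P x) - (cubeM m d x).real A) := by
  classical
  rw [Finset.sum_sub_distrib, sum_cubeM m d hm A hA hAu, jdisc]
  congr 1
  rw [Finset.card_filter]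
  push_cast
  refine Finset.sum_congr rfl fun x _ => ?_
  by_cases h : P x ∈ A <;> simp [h]

lemma bern_mgf (p s : ℝ) (h0 : 0 ≤ p) (h1 : p ≤ 1) (hs : |s| ≤ 1) :
    p * exp (s * (1 - p)) + (1 - p) * exp (s * (0 - p)) ≤ exp (s ^ 2 * (p * (1 - p))) := by
  have e : ∀ y : ℝ, |y| ≤ 1 → exp y ≤ 1 + y + y ^ 2 := fun y hy => by
    have := (abs_le.1 (Real.abs_exp_sub_one_sub_id_le hy)).2
    linarith
  have a1 : |s * (1 - p)| ≤ 1 := by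
    rw [abs_mul, abs_of_nonneg (by linarith : 0 ≤ 1 - p)]
    nlinarith [abs_nonneg s]
  have a2 : |s * (0 - p)| ≤ 1 := by
    rw [abs_mul, zero_sub, abs_neg, abs_of_nonneg h0]
    nlinarith [abs_nonneg s]
  have b1 := mul_le_mul_of_nonneg_left (e _ a1) h0
  have b2 := mul_le_mul_of_nonneg_left (e _ a2) (by linarith : 0 ≤ 1 - p)
  have b3 := Real.add_one_le_exp (s ^ 2 * (p * (1 - p)))
  nlinarith

lemma cube_integral (m d : ℕ) (hm : 0 < m) (A : Set (Fin d → ℝ)) (hA : MeasurableSet A)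
    (x : Fin d → Fin m) (s : ℝ) :
    Integrable (fun q => exp (s * (A.indicator 1 q - (cubeM m d x).real A))) (cubeM m d x) ∧
    ∫ q, exp (s * (A.indicator 1 q - (cubeM m d x).real A)) ∂(cubeM m d x) =
      (cubeM m d x).real A * exp (s * (1 - (cubeM m d x).real A)) +
      (1 - (cubeM m d x).real A) * exp (s * (0 - (cubeM m d x).real A)) := by
  have := cubeM_prob m d hm x
  set p := (cubeM m d x).real A
  have hf : (fun q => exp (s * (A.indicator (1 : (Fin d → ℝ) → ℝ) q - p))) =
      fun q => A.indicator (fun _ => exp (s * (1 - p)) - exp (s * (0 - p))) q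
        + exp (s * (0 - p)) := by
    funext q
    by_cases h : q ∈ A <;> simp [h]
  have hi : Integrable (A.indicator (fun _ : Fin d → ℝ => exp (s * (1 - p)) - exp (s * (0 - p))))
      (cubeM m d x) := (integrable_const _).indicator hA
  rw [hf]
  refine ⟨hi.add (integrable_const _), ?_⟩
  rw [integral_add hi (integrable_const _), integral_indicator_const _ hA]
  simp only [integral_const, probReal_univ, smul_eq_mul]
  change p * _ + _ = _
  ring

lemma disc_mgf (m d : ℕ) (hm : 0 < m) (A : Set (Fin d → ℝ)) (hA : MeasurableSet A)
    (hAu : A ⊆ unitC d) (v : ℝ)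
    (hv : ∑ x, (cubeM m d x).real A * (1 - (cubeM m d x).real A) ≤ v) (s : ℝ) (hs : |s| ≤ 1) :
    Integrable (fun P => exp (s * jdisc m d P A)) (jitterMeasure m d) ∧
    ∫ P, exp (s * jdisc m d P A) ∂(jitterMeasure m d) ≤ exp (s ^ 2 * v) := by
  have := cubeM_prob m d hm
  have hf : (fun P => exp (s * jdisc m d P A)) =
      fun P : (Fin d → Fin m) → (Fin d → ℝ) =>
        ∏ x, exp (s * (A.indicator 1 (P x) - (cubeM m d x).real A)) := by
    funext P
    rw [jdisc_eq_sum m d hm A hA hAu, Finset.mul_sum, Real.exp_sum]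
  rw [hf, jitterMeasure_eq]
  refine ⟨Integrable.fintype_prod_dep (fun x => (cube_integral m d hm A hA x s).1), ?_⟩
  rw [integral_fintype_prod_eq_prod
    (fun x q => exp (s * (A.indicator 1 q - (cubeM m d x).real A)))]
  calc _ ≤ ∏ x, exp (s ^ 2 * ((cubeM m d x).real A * (1 - (cubeM m d x).real A))) := by
        refine Finset.prod_le_prod (fun x _ => integral_nonneg fun q => (exp_pos _).le)
          fun x _ => ?_
        rw [(cube_integral m d hm A hA x s).2]
        exact bern_mgf _ _ measureReal_nonneg measureReal_le_one hs
    _ = exp (s ^ 2 * ∑ x, (cubeM m d x).real A * (1 - (cubeM m d x).real A)) := by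
        rw [Finset.mul_sum, Real.exp_sum]
    _ ≤ _ := by gcongr

lemma jitter_prob (m d : ℕ) (hm : 0 < m) : IsProbabilityMeasure (jitterMeasure m d) := by
  have := cubeM_prob m d hm
  rw [jitterMeasure_eq]
  infer_instance

lemma disc_tail (m d : ℕ) (hm : 0 < m) (A : Set (Fin d → ℝ)) (hA : MeasurableSet A)
    (hAu : A ⊆ unitC d) (v : ℝ) (hv0 : 0 < v)
    (hv : ∑ x, (cubeM m d x).real A * (1 - (cubeM m d x).real A) ≤ v) (R t : ℝ) (hR : 0 ≤ R)
    (ht : 2 * sqrt (v * R) + 2 * R ≤ t) :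
    (jitterMeasure m d).real {P | t ≤ |jdisc m d P A|} ≤ 2 * exp (-R) := by
  have := jitter_prob m d hm
  obtain ⟨s, hs0, hs1, hs⟩ : ∃ s : ℝ, 0 ≤ s ∧ s ≤ 1 ∧ -s * t + s ^ 2 * v ≤ -R := by
    by_cases h : R ≤ v
    · refine ⟨sqrt (R / v), sqrt_nonneg _, ?_, ?_⟩
      · refine Real.sqrt_le_iff.2 ⟨zero_le_one, ?_⟩
        rw [one_pow]
        exact (div_le_one hv0).2 h
      · rw [Real.sq_sqrt (by positivity)]
        have e1 : R / v * v = R := by field_simp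
        have e2 : sqrt (R / v) * sqrt (v * R) = R := by
          rw [← Real.sqrt_mul (by positivity)]
          rw [show R / v * (v * R) = R ^ 2 by field_simp]
          exact Real.sqrt_sq hR
        have := mul_le_mul_of_nonneg_left ht (sqrt_nonneg (R / v))
        have h3 := mul_nonneg (sqrt_nonneg (R / v)) hR
        nlinarith
    · refine ⟨1, by norm_num, le_rfl, ?_⟩
      have := sqrt_nonneg (v * R)
      linarith
  have key : ∀ σ : ℝ, |σ| = 1 →
      (jitterMeasure m d).real {P | t ≤ σ * jdisc m d P A} ≤ exp (-R) := by
    intro σ hσ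
    have hh : |s * σ| ≤ 1 := by rw [abs_mul, hσ, mul_one, abs_of_nonneg hs0]; exact hs1
    obtain ⟨hi, hm⟩ := disc_mgf m d hm A hA hAu v hv (s * σ) hh
    simp only [mul_assoc] at hi hm
    refine (measure_ge_le_exp_mul_mgf (X := fun P => σ * jdisc m d P A) t hs0 hi).trans ?_
    rw [mgf]
    refine (mul_le_mul_of_nonneg_left hm (exp_pos _).le).trans ?_
    rw [← Real.exp_add]
    have : σ ^ 2 = 1 := by rw [← sq_abs, hσ]; norm_num
    rw [mul_pow, this, mul_one]
    gcongr
  have hsub : {P | t ≤ |jdisc m d P A|} ⊆ {P | t ≤ 1 * jdisc m d P A} ∪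
      {P | t ≤ (-1) * jdisc m d P A} := by
    intro P hP
    simp only [Set.mem_ofPred_eq, le_abs] at hP
    rcases hP with h | h
    · left; simpa using h
    · right; simpa using h
  calc _ ≤ _ := measureReal_mono hsub
    _ ≤ _ := measureReal_union_le _ _
    _ ≤ exp (-R) + exp (-R) := add_le_add (key 1 (by simp)) (key (-1) (by simp))
    _ = _ := by ring

lemma measurableSet_box (d : ℕ) (y : Fin d → ℝ) : MeasurableSet (anchoredBox d y) :=
  MeasurableSet.univ_pi fun _ => measurableSet_Ico

lemma box_vol (d : ℕ) (y : Fin d → ℝ) (hy : ∀ i, 0 ≤ y i) :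
    (volume (anchoredBox d y)).toReal = ∏ i, y i := by
  rw [anchoredBox, Real.volume_pi_Ico, ENNReal.toReal_prod]
  refine Finset.prod_congr rfl fun i _ => ?_
  rw [sub_zero, ENNReal.toReal_ofReal (hy i)]

lemma box_ne_top (d : ℕ) (y : Fin d → ℝ) : volume (anchoredBox d y) ≠ ⊤ := by
  rw [anchoredBox, Real.volume_pi_Ico]
  exact (ENNReal.prod_lt_top (fun _ _ => ENNReal.ofReal_lt_top)).ne

lemma box_mono (d : ℕ) (x y : Fin d → ℝ) (h : ∀ i, x i ≤ y i) :
    anchoredBox d x ⊆ anchoredBox d y :=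
  Set.pi_mono fun i _ => Set.Ico_subset_Ico_right (h i)

lemma box_unit (d : ℕ) (y : Fin d → ℝ) (h : ∀ i, y i ≤ 1) : anchoredBox d y ⊆ unitC d :=
  Set.pi_mono fun i _ => Set.Ico_subset_Ico_right (h i)

lemma vol_diff_box (d : ℕ) (x y : Fin d → ℝ) (hx : ∀ i, 0 ≤ x i) (h : ∀ i, x i ≤ y i) :
    (volume (anchoredBox d y \ anchoredBox d x)).toReal = ∏ i, y i - ∏ i, x i := by
  rw [measure_sdiff (box_mono d x y h) (measurableSet_box d x).nullMeasurableSet (box_ne_top d x),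
    ENNReal.toReal_sub_of_le (measure_mono (box_mono d x y h)) (box_ne_top d y),
    box_vol d x hx, box_vol d y fun i => (hx i).trans (h i)]

lemma jdisc_diff_box (m d : ℕ) (P : (Fin d → Fin m) → (Fin d → ℝ)) (x y : Fin d → ℝ)
    (hx : ∀ i, 0 ≤ x i) (h : ∀ i, x i ≤ y i) :
    jdisc m d P (anchoredBox d y \ anchoredBox d x) =
      jdisc m d P (anchoredBox d y) - jdisc m d P (anchoredBox d x) := by
  classical
  have hc : ((Finset.univ.filter fun z => P z ∈ anchoredBox d y \ anchoredBox d x).card : ℝ) =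
      ((Finset.univ.filter fun z => P z ∈ anchoredBox d y).card : ℝ) -
        ((Finset.univ.filter fun z => P z ∈ anchoredBox d x).card : ℝ) := by
    rw [Finset.card_filter, Finset.card_filter, Finset.card_filter]
    push_cast
    rw [← Finset.sum_sub_distrib]
    refine Finset.sum_congr rfl fun z _ => ?_
    by_cases h1 : P z ∈ anchoredBox d x
    · have h2 := box_mono d x y h h1
      simp [h1, h2]
    · by_cases h2 : P z ∈ anchoredBox d y <;> simp [h1, h2]
  unfold jdisc
  rw [vol_diff_box d x y hx h, box_vol d x hx, box_vol d y fun i => (hx i).trans (h i)]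
  have : ∀ (a b c : ℝ), a = b - c → ∀ N p q : ℝ, a - N * (p - q) = b - N * p - (c - N * q) := by
    intro a b c h N p q
    rw [h]
    ring
  apply this
  convert hc

lemma jdisc_mono_box (m d : ℕ) (P : (Fin d → Fin m) → (Fin d → ℝ)) (x y : Fin d → ℝ)
    (hx : ∀ i, 0 ≤ x i) (h : ∀ i, x i ≤ y i) :
    jdisc m d P (anchoredBox d x) ≤
      jdisc m d P (anchoredBox d y) + (m : ℝ) ^ d * (∏ i, y i - ∏ i, x i) := by
  have h1 := jdisc_diff_box m d P x y hx h
  have h2 : -((m : ℝ) ^ d * (∏ i, y i - ∏ i, x i)) ≤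
      jdisc m d P (anchoredBox d y \ anchoredBox d x) := by
    rw [jdisc, vol_diff_box d x y hx h]
    have : ∀ a b : ℝ, 0 ≤ a → -b ≤ a - b := fun a b h => by linarith
    exact this _ _ (Nat.cast_nonneg _)
  linarith

lemma jdisc_box_lower (m d : ℕ) (P : (Fin d → Fin m) → (Fin d → ℝ)) (x : Fin d → ℝ)
    (hx : ∀ i, 0 ≤ x i) :
    -((m : ℝ) ^ d * ∏ i, x i) ≤ jdisc m d P (anchoredBox d x) := by
  rw [jdisc, box_vol d x hx]
  have : ∀ a b : ℝ, 0 ≤ a → -b ≤ a - b := fun a b h => by linarith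
  exact this _ _ (Nat.cast_nonneg _)

lemma prod_sub_le {ι : Type*} (s : Finset ι) (x y : ι → ℝ) (hx : ∀ i, 0 ≤ x i)
    (h : ∀ i, x i ≤ y i) (hy : ∀ i, y i ≤ 1) :
    ∏ i ∈ s, y i - ∏ i ∈ s, x i ≤ ∑ i ∈ s, (y i - x i) := by
  classical
  induction s using Finset.induction_on with
  | empty => simp
  | insert a s ha ih =>
    rw [Finset.prod_insert ha, Finset.prod_insert ha, Finset.sum_insert ha]
    have p0 : 0 ≤ ∏ i ∈ s, y i := Finset.prod_nonneg fun i _ => (hx i).trans (h i)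
    have p1 : ∏ i ∈ s, y i ≤ 1 := Finset.prod_le_one (fun i _ => (hx i).trans (h i)) fun i _ => hy i
    have p2 : ∏ i ∈ s, x i ≤ ∏ i ∈ s, y i := Finset.prod_le_prod (fun i _ => hx i) fun i _ => h i
    have ha1 : x a ≤ 1 := (h a).trans (hy a)
    nlinarith [h a, hx a, hy a, mul_le_mul_of_nonneg_left p1 (sub_nonneg.2 (h a)),
      mul_le_mul_of_nonneg_right ha1 (sub_nonneg.2 p2)]

lemma var_le (m d : ℕ) (hm : 0 < m) (A : Set (Fin d → ℝ)) (hA : MeasurableSet A)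
    (hAu : A ⊆ unitC d) :
    ∑ x, (cubeM m d x).real A * (1 - (cubeM m d x).real A) ≤ (m : ℝ) ^ d * (volume A).toReal := by
  rw [← sum_cubeM m d hm A hA hAu]
  refine Finset.sum_le_sum fun x _ => ?_
  have h := measureReal_nonneg (μ := cubeM m d x) (s := A)
  nlinarith

lemma var_box0 (m d : ℕ) (hm : 0 < m) (y : Fin d → ℝ) (hy0 : ∀ i, 0 ≤ y i)
    (hy1 : ∀ i, y i ≤ 1) :
    ∑ x, (cubeM m d x).real (anchoredBox d y) * (1 - (cubeM m d x).real (anchoredBox d y)) ≤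
      (m : ℝ) ^ d * (d / m) := by
  have hm' : (0 : ℝ) < m := by exact_mod_cast hm
  have hprob := cubeM_prob m d hm
  set z : Fin d → ℝ := fun i => (⌊y i * m⌋₊ : ℝ) / m with hz
  have hz0 : ∀ i, 0 ≤ z i := fun i => by positivity
  have hzy : ∀ i, z i ≤ y i := fun i => by
    rw [hz]; simp only
    rw [div_le_iff₀ hm']
    exact Nat.floor_le (mul_nonneg (hy0 i) hm'.le)
  have hyz : ∀ i, y i - z i ≤ 1 / m := fun i => by
    have : y i * m < ⌊y i * m⌋₊ + 1 := Nat.lt_floor_add_one _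
    have h2 : y i ≤ ((⌊y i * m⌋₊ : ℝ) + 1) / m := by
      rw [le_div_iff₀ hm']; exact this.le
    rw [add_div] at h2
    rw [hz]; simp only
    linarith
  set A := anchoredBox d y
  set B := anchoredBox d z
  have hA : MeasurableSet A := measurableSet_box d y
  have hAB : MeasurableSet (A \ B) := hA.diff (measurableSet_box d z)
  have hBA : B ⊆ A := box_mono d z y hzy
  have step : ∀ x, (cubeM m d x).real A * (1 - (cubeM m d x).real A) ≤
      (cubeM m d x).real (A \ B) := by
    intro x
    by_cases hx : ∀ i, (x i : ℕ) < ⌊y i * m⌋₊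
    · have hsub : jitterCube m d x ⊆ A := by
        refine Set.Subset.trans ?_ hBA
        intro p hp
        rw [mem_cube_iff m d hm] at hp
        simp only [B, anchoredBox, Set.mem_univ_pi, Set.mem_Ico]
        intro i
        have h1 := hp i
        have h2 : ((x i : ℕ) : ℝ) + 1 ≤ ⌊y i * m⌋₊ := by exact_mod_cast hx i
        constructor
        · have : 0 ≤ p i * m := le_trans (Nat.cast_nonneg _) h1.1
          exact nonneg_of_mul_nonneg_left this hm'
        · rw [hz]; simp only
          rw [lt_div_iff₀ hm']; linarith
      have h1 : (cubeM m d x).real A = 1 := by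
        rw [← probReal_univ (μ := cubeM m d x)]
        simp only [Measure.real, cubeM, Measure.smul_apply, Measure.restrict_apply hA,
          Measure.restrict_apply_univ, Set.inter_eq_right.2 hsub]
      rw [h1]
      simp
    · push Not at hx
      obtain ⟨i, hi⟩ := hx
      have h1 : (A \ B) ∩ jitterCube m d x = A ∩ jitterCube m d x := by
        ext p
        constructor
        · rintro ⟨⟨h1, _⟩, h2⟩; exact ⟨h1, h2⟩
        · rintro ⟨h1, h2⟩
          refine ⟨⟨h1, fun h3 => ?_⟩, h2⟩
          rw [mem_cube_iff m d hm] at h2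
          simp only [B, anchoredBox, Set.mem_univ_pi, Set.mem_Ico] at h3
          have a1 := (h3 i).2
          rw [hz] at a1; simp only at a1
          rw [lt_div_iff₀ hm'] at a1
          have a2 := (h2 i).1
          have a3 : ((⌊y i * m⌋₊ : ℕ) : ℝ) ≤ (x i : ℕ) := by exact_mod_cast hi
          linarith
      have h2 : (cubeM m d x).real (A \ B) = (cubeM m d x).real A := by
        simp only [Measure.real, cubeM, Measure.smul_apply, Measure.restrict_apply hA,
          Measure.restrict_apply hAB, h1]
      rw [h2]
      have h := measureReal_nonneg (μ := cubeM m d x) (s := A)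
      nlinarith
  refine (Finset.sum_le_sum fun x _ => step x).trans ?_
  rw [sum_cubeM m d hm _ hAB (Set.sdiff_subset.trans (box_unit d y hy1)), vol_diff_box d z y hz0 hzy]
  refine mul_le_mul_of_nonneg_left ?_ (by positivity)
  refine (prod_sub_le _ z y hz0 hzy hy1).trans ?_
  refine (Finset.sum_le_sum fun i _ => hyz i).trans ?_
  simp [div_eq_mul_inv]

/-- resolution parameter of level `k` -/
def qk (m d k : ℕ) : ℝ := 2 ^ k * ((m : ℝ) / d)

/-- logarithmic mesh width of level `k` -/
def hk (m d k : ℕ) : ℝ := 1 / (d * qk m d k)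

/-- logarithmic grid point -/
def gp (m d k : ℕ) (n : Fin d → ℕ) : Fin d → ℝ := fun i => exp (-(hk m d k * n i))

/-- truncation of the logarithmic grid -/
def Sk (m d k : ℕ) : ℕ := ⌊d * qk m d k * log (qk m d k) + d⌋₊

/-- integer points in a simplex -/
def simp0 (d S : ℕ) : Finset (Fin d → ℕ) :=
  (Fintype.piFinset fun _ => Finset.range (S + 1)).filter fun n => ∑ i, n i ≤ S

lemma mem_simp0 (d S : ℕ) (n : Fin d → ℕ) : n ∈ simp0 d S ↔ ∑ i, n i ≤ S := by
  simp only [simp0, Finset.mem_filter, Fintype.mem_piFinset, Finset.mem_range, and_iff_right_iff_imp]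
  intro h i
  have := Finset.single_le_sum (f := n) (fun i _ => Nat.zero_le _) (Finset.mem_univ i)
  omega

lemma card_simp0 (d S : ℕ) (hd : 0 < d) :
    ((simp0 d S).card : ℝ) ≤ (exp 1 * ((S : ℝ) / d + 1)) ^ d := by
  have hd' : (0 : ℝ) < d := by exact_mod_cast hd
  have hS : (0 : ℝ) ≤ S := Nat.cast_nonneg S
  set z : ℝ := S / (S + d) with hz
  have hz0 : 0 ≤ z := by positivity
  have hz1 : z < 1 := by rw [hz, div_lt_one (by positivity)]; linarith
  have hzz : 1 - z = ((S : ℝ) / d + 1)⁻¹ := by rw [hz]; field_simp; ring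
  have hgeo : ∑ j ∈ Finset.range (S + 1), z ^ j ≤ (S : ℝ) / d + 1 := by
    have h1 : (∑ j ∈ Finset.range (S + 1), z ^ j) * (1 - z) ≤ 1 := by
      rw [geom_sum_mul_neg]
      linarith [pow_nonneg hz0 (S + 1)]
    rw [hzz, ← div_eq_mul_inv, div_le_one (by positivity)] at h1
    exact h1
  have hzS : exp (-(d : ℝ)) ≤ z ^ S := by
    rcases Nat.eq_zero_or_pos S with h | h
    · subst h; simp
    · have hS' : (0 : ℝ) < S := by exact_mod_cast h
      have h1 : exp (-((d : ℝ) / S)) ≤ z := by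
        rw [Real.exp_neg, hz]
        have : (S : ℝ) / (S + d) = ((d : ℝ) / S + 1)⁻¹ := by field_simp; ring
        rw [this]
        exact inv_anti₀ (by positivity) (Real.add_one_le_exp _)
      calc exp (-(d : ℝ)) = exp (-((d : ℝ) / S)) ^ S := by
            rw [← Real.exp_nat_mul]; congr 1; field_simp
        _ ≤ _ := pow_le_pow_left₀ (exp_pos _).le h1 _
  have hsum : ((simp0 d S).card : ℝ) * z ^ S ≤ ((S : ℝ) / d + 1) ^ d := by
    calc ((simp0 d S).card : ℝ) * z ^ S = ∑ n ∈ simp0 d S, z ^ S := by simp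
      _ ≤ ∑ n ∈ simp0 d S, ∏ i, z ^ (n i) := by
          refine Finset.sum_le_sum fun n hn => ?_
          rw [mem_simp0] at hn
          rw [Finset.prod_pow_eq_pow_sum]
          exact pow_le_pow_of_le_one hz0 hz1.le hn
      _ ≤ ∑ n ∈ Fintype.piFinset (fun _ : Fin d => Finset.range (S + 1)), ∏ i, z ^ (n i) :=
          Finset.sum_le_sum_of_subset_of_nonneg (Finset.filter_subset _ _)
            fun n _ _ => Finset.prod_nonneg fun i _ => pow_nonneg hz0 _
      _ = (∑ j ∈ Finset.range (S + 1), z ^ j) ^ d := by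
          rw [← Finset.prod_univ_sum (fun _ : Fin d => Finset.range (S + 1)) fun _ j => z ^ j]
          simp
      _ ≤ _ := pow_le_pow_left₀ (Finset.sum_nonneg fun j _ => pow_nonneg hz0 _) hgeo _
  have h3 : ((simp0 d S).card : ℝ) * exp (-(d : ℝ)) ≤ ((S : ℝ) / d + 1) ^ d :=
    (mul_le_mul_of_nonneg_left hzS (Nat.cast_nonneg _)).trans hsum
  rw [Real.exp_neg, ← div_eq_mul_inv, div_le_iff₀ (exp_pos _)] at h3
  rw [mul_pow, ← Real.exp_nat_mul, mul_one, mul_comm]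
  exact h3

lemma qk_succ (m d k : ℕ) : qk m d (k + 1) = 2 * qk m d k := by
  simp only [qk]; ring

lemma one_le_q (m d : ℕ) (hd : 0 < d) (hmd : d ≤ m) : 1 ≤ (m : ℝ) / d := by
  rw [le_div_iff₀ (by exact_mod_cast hd)]
  simpa using (by exact_mod_cast hmd : (d : ℝ) ≤ m)

lemma pow_le_qk (m d k : ℕ) (hd : 0 < d) (hmd : d ≤ m) : 2 ^ k ≤ qk m d k := by
  have := one_le_q m d hd hmd
  simp only [qk]
  nlinarith [pow_pos (zero_lt_two' ℝ) k]

lemma one_le_qk (m d k : ℕ) (hd : 0 < d) (hmd : d ≤ m) : 1 ≤ qk m d k :=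
  (one_le_pow₀ (by norm_num)).trans (pow_le_qk m d k hd hmd)

lemma hk_succ (m d k : ℕ) : hk m d k = 2 * hk m d (k + 1) := by
  simp only [hk, qk_succ]
  rw [mul_left_comm, one_div, one_div, mul_inv (2 : ℝ)]
  ring

lemma prod_gp (m d k : ℕ) (n : Fin d → ℕ) :
    ∏ i, gp m d k n i = exp (-(hk m d k * (∑ i, n i : ℕ))) := by
  simp only [gp]
  rw [← Real.exp_sum]
  push_cast
  rw [Finset.mul_sum, Finset.sum_neg_distrib]

lemma gp_nonneg (m d k : ℕ) (n : Fin d → ℕ) (i : Fin d) : 0 ≤ gp m d k n i := (exp_pos _).le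

lemma hk_nonneg (m d k : ℕ) : 0 ≤ hk m d k := by
  simp only [hk, qk]; positivity

lemma d_hk (m d k : ℕ) (hd : 0 < d) (hmd : d ≤ m) : d * hk m d k = 1 / qk m d k := by
  have := one_le_qk m d k hd hmd
  have hd' : (0 : ℝ) < d := by exact_mod_cast hd
  simp only [hk]
  field_simp

lemma gp_le_one (m d k : ℕ) (n : Fin d → ℕ) (i : Fin d) : gp m d k n i ≤ 1 := by
  simp only [gp]
  rw [Real.exp_le_one_iff]
  have := mul_nonneg (hk_nonneg m d k) (Nat.cast_nonneg (α := ℝ) (n i))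
  linarith

/-- parent of a grid point -/
def par {d : ℕ} (n : Fin d → ℕ) : Fin d → ℕ := fun i => (n i + 1) / 2

lemma gp_par_le (m d k : ℕ) (n : Fin d → ℕ) (i : Fin d) :
    gp m d k (par n) i ≤ gp m d (k + 1) n i := by
  simp only [gp]
  rw [Real.exp_le_exp, hk_succ]
  have h1 : n i ≤ 2 * par n i := by simp only [par]; omega
  have h2 : (n i : ℝ) ≤ 2 * par n i := by exact_mod_cast h1
  have := mul_le_mul_of_nonneg_left h2 (hk_nonneg m d (k + 1))
  linarith

lemma sum_par_le {d : ℕ} (n : Fin d → ℕ) : 2 * ∑ i, par n i ≤ ∑ i, n i + d := by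
  have : ∑ i, 2 * par n i ≤ ∑ i, (n i + 1) :=
    Finset.sum_le_sum fun i _ => by simp only [par]; omega
  rw [Finset.sum_add_distrib, ← Finset.mul_sum] at this
  simpa using this

/-- the chaining sets -/
def chainSet (m d : ℕ) : ℕ → (Fin d → ℕ) → Set (Fin d → ℝ)
  | 0, n => anchoredBox d (gp m d 0 n)
  | k + 1, n => if par n ∈ simp0 d (Sk m d k) then
      anchoredBox d (gp m d (k + 1) n) \ anchoredBox d (gp m d k (par n))
      else anchoredBox d (gp m d (k + 1) n)

lemma exp_diff (a b : ℝ) (ha : 0 ≤ a) : exp (-a) - exp (-(a + b)) ≤ max b 0 := by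
  rw [neg_add, Real.exp_add]
  have h1 : exp (-a) ≤ 1 := by rw [Real.exp_le_one_iff]; linarith
  have h2 := Real.add_one_le_exp (-b)
  have h3 := exp_pos (-a)
  rcases le_total b 0 with h | h
  · rw [max_eq_right h]
    have : 1 ≤ exp (-b) := by linarith
    nlinarith
  · rw [max_eq_left h]
    nlinarith

lemma chainSet_prop (m d k : ℕ) (hd : 0 < d) (hmd : d ≤ m) (n : Fin d → ℕ) :
    MeasurableSet (chainSet m d k n) ∧ chainSet m d k n ⊆ unitC d ∧
    ∑ x, (cubeM m d x).real (chainSet m d k n) * (1 - (cubeM m d x).real (chainSet m d k n)) ≤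
      2 * (m : ℝ) ^ d / qk m d k := by
  have hm : 0 < m := hd.trans_le hmd
  have hm' : (0 : ℝ) < m := by exact_mod_cast hm
  have hd' : (0 : ℝ) < d := by exact_mod_cast hd
  rcases k with _ | k
  · refine ⟨measurableSet_box _ _, box_unit _ _ (gp_le_one m d 0 n), ?_⟩
    refine (var_box0 m d hm _ (gp_nonneg m d 0 n) (gp_le_one m d 0 n)).trans ?_
    have : 2 * (m : ℝ) ^ d / qk m d 0 = 2 * ((m : ℝ) ^ d * (d / m)) := by
      simp only [qk]; field_simp
    rw [this]
    have : 0 ≤ (m : ℝ) ^ d * (d / m) := by positivity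
    linarith
  · have hmeas : MeasurableSet (chainSet m d (k + 1) n) := by
      simp only [chainSet]
      split_ifs
      · exact (measurableSet_box _ _).diff (measurableSet_box _ _)
      · exact measurableSet_box _ _
    have hu : chainSet m d (k + 1) n ⊆ unitC d := by
      simp only [chainSet]
      split_ifs
      · exact Set.sdiff_subset.trans (box_unit _ _ (gp_le_one m d _ n))
      · exact box_unit _ _ (gp_le_one m d _ n)
    refine ⟨hmeas, hu, (var_le m d hm _ hmeas hu).trans ?_⟩
    have q1 := one_le_qk m d k hd hmd
    have e1 : 2 * (m : ℝ) ^ d / qk m d (k + 1) = (m : ℝ) ^ d * (1 / qk m d k) := by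
      rw [qk_succ]; field_simp
    rw [e1]
    refine mul_le_mul_of_nonneg_left ?_ (by positivity)
    have hpar := sum_par_le n
    have hpar' : 2 * ((∑ i, par n i : ℕ) : ℝ) ≤ (∑ i, n i : ℕ) + d := by exact_mod_cast hpar
    have hh := hk_succ m d k
    have h0 := hk_nonneg m d (k + 1)
    have hdh := d_hk m d k hd hmd
    have hm1 := mul_le_mul_of_nonneg_left hpar' h0
    simp only [chainSet]
    split_ifs with hc
    · rw [vol_diff_box _ _ _ (gp_nonneg _ _ _ _) (gp_par_le m d k n), prod_gp, prod_gp]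
      have h2 := exp_diff (hk m d (k + 1) * (∑ i, n i : ℕ))
        (hk m d k * (∑ i, par n i : ℕ) - hk m d (k + 1) * (∑ i, n i : ℕ)) (by positivity)
      rw [add_sub_cancel] at h2
      refine h2.trans (max_le ?_ (by positivity))
      rw [← hdh, hh]
      nlinarith
    · rw [box_vol _ _ (gp_nonneg _ _ _ _), prod_gp]
      rw [mem_simp0, not_le, Sk, Nat.floor_lt (by
        have := Real.log_nonneg q1
        positivity)] at hc
      have h3 : 1 / qk m d k = exp (-(log (qk m d k))) := by
        rw [Real.exp_neg, Real.exp_log (by linarith), one_div]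
      rw [h3, Real.exp_le_exp, neg_le_neg_iff]
      have h4 := mul_le_mul_of_nonneg_left hc.le (hk_nonneg m d k)
      have h5 : hk m d k * (d * qk m d k * log (qk m d k) + d) = log (qk m d k) + d * hk m d k := by
        have : hk m d k * (d * qk m d k) = 1 := by
          simp only [hk]; field_simp
        linear_combination log (qk m d k) * this
      have h6 : 0 ≤ d * hk m d (k + 1) := by positivity
      nlinarith

lemma chain_bound (m d K : ℕ) (P : (Fin d → Fin m) → (Fin d → ℝ)) (t : ℕ → ℝ)
    (ht : ∀ k, 0 ≤ t k)
    (hgood : ∀ k ≤ K, ∀ n ∈ simp0 d (Sk m d k), |jdisc m d P (chainSet m d k n)| ≤ t k) :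
    ∀ k ≤ K, ∀ n ∈ simp0 d (Sk m d k),
      |jdisc m d P (anchoredBox d (gp m d k n))| ≤ ∑ j ∈ Finset.range (k + 1), t j := by
  intro k
  induction k with
  | zero =>
    intro hk n hn
    simpa [chainSet] using hgood 0 hk n hn
  | succ k ih =>
    intro hk n hn
    have h1 := hgood (k + 1) hk n hn
    rw [Finset.sum_range_succ]
    simp only [chainSet] at h1
    split_ifs at h1 with hc
    · have h2 := ih (by omega) _ hc
      rw [jdisc_diff_box _ _ _ _ _ (gp_nonneg _ _ _ _) (gp_par_le m d k n)] at h1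
      rw [abs_le] at *
      constructor <;> linarith
    · have := Finset.sum_nonneg (s := Finset.range (k + 1)) fun j _ => ht j
      linarith

lemma final_big (m d K : ℕ) (hd : 0 < d) (hmd : d ≤ m) (P : (Fin d → Fin m) → (Fin d → ℝ))
    (T : ℝ)
    (hT : ∀ n ∈ simp0 d (Sk m d K), |jdisc m d P (anchoredBox d (gp m d K n))| ≤ T)
    (y : Fin d → ℝ) (hy0 : ∀ i, 0 < y i) (hy1 : ∀ i, y i ≤ 1)
    (hy : 1 / qk m d K ≤ ∏ i, y i) :
    |jdisc m d P (anchoredBox d y)| ≤ T + (m : ℝ) ^ d / qk m d K := by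
  have hd' : (0 : ℝ) < d := by exact_mod_cast hd
  have q1 := one_le_qk m d K hd hmd
  have q0 : 0 < qk m d K := by linarith
  have hdh := d_hk m d K hd hmd
  have hh : 0 < hk m d K := by simp only [hk]; positivity
  set h := hk m d K with hdef
  set u : Fin d → ℝ := fun i => -log (y i) with hu
  have hu0 : ∀ i, 0 ≤ u i := fun i => by
    have := Real.log_nonpos (hy0 i).le (hy1 i)
    simp only [hu]; linarith
  have hyu : ∀ i, y i = exp (-(u i)) := fun i => by
    simp only [hu, neg_neg]; rw [Real.exp_log (hy0 i)]
  have husum : ∑ i, u i ≤ log (qk m d K) := by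
    have h1 : ∏ i, y i = exp (-∑ i, u i) := by
      rw [← Finset.sum_neg_distrib, Real.exp_sum]
      exact Finset.prod_congr rfl fun i _ => hyu i
    have h3 : 1 / qk m d K = exp (-(log (qk m d K))) := by
      rw [Real.exp_neg, Real.exp_log q0, one_div]
    rw [h1, h3, Real.exp_le_exp] at hy
    linarith
  set n : Fin d → ℕ := fun i => ⌊u i / h⌋₊ with hn
  have n1 : ∀ i, h * n i ≤ u i := fun i => by
    have := Nat.floor_le (div_nonneg (hu0 i) hh.le)
    rw [le_div_iff₀ hh] at this
    simp only [hn]; linarith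
  have n2 : ∀ i, u i ≤ h * (n i + 1) := fun i => by
    have := (Nat.lt_floor_add_one (u i / h)).le
    rw [div_le_iff₀ hh] at this
    simp only [hn]; linarith
  have memlo : (fun i => n i + 1) ∈ simp0 d (Sk m d K) := by
    rw [mem_simp0, Sk]
    apply Nat.le_floor
    push_cast
    have h1 : ∑ i, (n i : ℝ) ≤ (∑ i, u i) / h := by
      rw [Finset.sum_div]
      refine Finset.sum_le_sum fun i _ => ?_
      rw [le_div_iff₀ hh]; linarith [n1 i]
    have h2 : (∑ i, u i) / h ≤ d * qk m d K * log (qk m d K) := by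
      rw [hdef, hk, div_div_eq_mul_div, div_one, mul_comm]
      exact mul_le_mul_of_nonneg_left husum (by positivity)
    rw [Finset.sum_add_distrib]
    simp
    linarith
  have memhi : n ∈ simp0 d (Sk m d K) := by
    rw [mem_simp0] at *
    refine le_trans (Finset.sum_le_sum fun i _ => ?_) memlo
    omega
  have hi := hT _ memhi
  have lo := hT _ memlo
  have b1 : ∀ i, y i ≤ gp m d K n i := fun i => by
    rw [hyu i]; simp only [gp]
    rw [Real.exp_le_exp]; linarith [n1 i]
  have b2 : ∀ i, gp m d K (fun i => n i + 1) i ≤ y i := fun i => by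
    rw [hyu i]; simp only [gp]
    rw [Real.exp_le_exp]; push_cast; linarith [n2 i]
  have c1 := jdisc_mono_box m d P y _ (fun i => (hy0 i).le) b1
  have c2 := jdisc_mono_box m d P _ y (gp_nonneg m d K _) b2
  have e1 : ∏ i, y i ≤ ∏ i, gp m d K n i :=
    Finset.prod_le_prod (fun i _ => (hy0 i).le) fun i _ => b1 i
  have e2 : ∏ i, gp m d K (fun i => n i + 1) i ≤ ∏ i, y i :=
    Finset.prod_le_prod (fun i _ => gp_nonneg m d K _ i) fun i _ => b2 i
  have e3 : ∏ i, gp m d K n i - ∏ i, gp m d K (fun i => n i + 1) i ≤ 1 / qk m d K := by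
    rw [prod_gp, prod_gp, ← hdh]
    have h2 := exp_diff (h * (∑ i, n i : ℕ)) (d * h) (by positivity)
    rw [max_eq_left (by positivity)] at h2
    refine le_trans (le_of_eq ?_) h2
    congr 3
    rw [Finset.sum_add_distrib]
    simp
    ring
  have hN : (0 : ℝ) ≤ (m : ℝ) ^ d := by positivity
  have f1 := mul_le_mul_of_nonneg_left
    (show ∏ i, gp m d K n i - ∏ i, y i ≤ 1 / qk m d K by linarith) hN
  have f2 := mul_le_mul_of_nonneg_left
    (show ∏ i, y i - ∏ i, gp m d K (fun i => n i + 1) i ≤ 1 / qk m d K by linarith) hN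
  rw [mul_one_div] at f1 f2
  rw [abs_le] at *
  constructor <;> linarith

lemma final_all (m d K : ℕ) (hd : 0 < d) (hmd : d ≤ m) (P : (Fin d → Fin m) → (Fin d → ℝ))
    (T : ℝ) (hT0 : 0 ≤ T)
    (hT : ∀ n ∈ simp0 d (Sk m d K), |jdisc m d P (anchoredBox d (gp m d K n))| ≤ T)
    (y : Fin d → ℝ) (hy0 : ∀ i, 0 ≤ y i) (hy1 : ∀ i, y i ≤ 1) :
    |jdisc m d P (anchoredBox d y)| ≤ T + 2 * ((m : ℝ) ^ d / qk m d K) := by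
  have q1 := one_le_qk m d K hd hmd
  have q0 : 0 < qk m d K := by linarith
  have hN : (0 : ℝ) ≤ (m : ℝ) ^ d := by positivity
  have hNq : 0 ≤ (m : ℝ) ^ d / qk m d K := by positivity
  by_cases hy : 1 / qk m d K ≤ ∏ i, y i
  · have hpos : ∀ i, 0 < y i := by
      intro i
      refine lt_of_le_of_ne (hy0 i) fun h => ?_
      rw [Finset.prod_eq_zero (Finset.mem_univ i) h.symm] at hy
      have : 0 < 1 / qk m d K := by positivity
      linarith
    have := final_big m d K hd hmd P T hT y hpos hy1 hy
    linarith
  · push Not at hy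
    have hcont : Continuous fun s : ℝ => ∏ i, (y i + s * (1 - y i)) := by fun_prop
    obtain ⟨s, hs, hsv⟩ : ∃ s ∈ Set.Icc (0 : ℝ) 1, ∏ i, (y i + s * (1 - y i)) = 1 / qk m d K := by
      have := intermediate_value_Icc (zero_le_one' ℝ) hcont.continuousOn
      refine this ⟨by simpa using hy.le, ?_⟩
      simp only [one_mul, add_sub_cancel, Finset.prod_const_one]
      rw [div_le_one q0]; exact q1
    set z : Fin d → ℝ := fun i => y i + s * (1 - y i) with hz
    have hyz : ∀ i, y i ≤ z i := fun i => by
      have := mul_nonneg hs.1 (sub_nonneg.2 (hy1 i))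
      simp only [hz]; linarith
    have hz1 : ∀ i, z i ≤ 1 := fun i => by
      have := mul_le_mul_of_nonneg_right hs.2 (sub_nonneg.2 (hy1 i))
      simp only [hz]; linarith
    have hsv' : ∏ i, z i = 1 / qk m d K := hsv
    have hpos : ∀ i, 0 < z i := by
      intro i
      refine lt_of_le_of_ne ((hy0 i).trans (hyz i)) fun h => ?_
      rw [Finset.prod_eq_zero (Finset.mem_univ i) h.symm] at hsv'
      have : 0 < 1 / qk m d K := by positivity
      linarith
    have h1 := final_big m d K hd hmd P T hT z hpos hz1 hsv'.ge
    have h2 := jdisc_mono_box m d P y z hy0 hyz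
    have h3 := jdisc_box_lower m d P y hy0
    have h4 : 0 ≤ ∏ i, y i := Finset.prod_nonneg fun i _ => hy0 i
    have f1 := mul_le_mul_of_nonneg_left
      (show ∏ i, z i - ∏ i, y i ≤ 1 / qk m d K by linarith) hN
    have f2 := mul_le_mul_of_nonneg_left hy.le hN
    rw [mul_one_div] at f1 f2
    rw [abs_le] at *
    constructor <;> linarith

/-- logarithmic complexity of level `k` -/
def lamk (m d k : ℕ) : ℝ := log (4 * exp 1 * qk m d k)

lemma lamk_eq (m d k : ℕ) (hd : 0 < d) (hmd : d ≤ m) :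
    lamk m d k = lamk m d 0 + k * log 2 := by
  have q1 := one_le_q m d hd hmd
  have : (0 : ℝ) < m / d := by linarith
  simp only [lamk, qk]
  rw [show 4 * exp 1 * (2 ^ k * ((m : ℝ) / d)) = (4 * exp 1 * (2 ^ 0 * ((m : ℝ) / d))) * 2 ^ k by ring,
    Real.log_mul (by positivity) (by positivity), Real.log_pow]

lemma lamk_zero_ge (m d : ℕ) (hd : 0 < d) (hmd : d ≤ m) : 2.38 ≤ lamk m d 0 := by
  have q1 := one_le_qk m d 0 hd hmd
  simp only [lamk]
  rw [Real.log_mul (by positivity) (by linarith), Real.log_mul (by norm_num) (by positivity),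
    Real.log_exp, show (4 : ℝ) = 2 ^ 2 by norm_num, Real.log_pow]
  have := Real.log_nonneg q1
  have := Real.log_two_gt_d9
  push_cast
  linarith

lemma lamk_ge (m d k : ℕ) (hd : 0 < d) (hmd : d ≤ m) : 2.38 ≤ lamk m d k := by
  rw [lamk_eq m d k hd hmd]
  have := lamk_zero_ge m d hd hmd
  have : 0 ≤ (k : ℝ) * log 2 := mul_nonneg (Nat.cast_nonneg _) (Real.log_nonneg (by norm_num))
  linarith

lemma count_exp (m d k : ℕ) (hd : 2 ≤ d) (hmd : d ≤ m) :
    ((simp0 d (Sk m d k)).card : ℝ) * exp (-(2 * d * lamk m d k)) ≤ 1 / 400 * (1 / 2) ^ k := by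
  have hd0 : 0 < d := by omega
  have hd' : (0 : ℝ) < d := by exact_mod_cast hd0
  have q1 := one_le_qk m d k hd0 hmd
  have q2 := pow_le_qk m d k hd0 hmd
  set q := qk m d k with hq
  have q0 : 0 < q := by linarith
  have hl := Real.log_nonneg q1
  have hsq : 0 < sqrt q := Real.sqrt_pos.2 q0
  have hss : sqrt q * sqrt q = q := Real.mul_self_sqrt q0.le
  have hS : (Sk m d k : ℝ) ≤ d * q * log q + d := Nat.floor_le (by positivity)
  have hS2 : (Sk m d k : ℝ) / d + 1 ≤ 2 * (q * sqrt q) := by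
    have h1 : (Sk m d k : ℝ) / d ≤ q * log q + 1 := by
      rw [div_le_iff₀ hd']; linarith
    have h2 : log q ≤ 2 * (sqrt q - 1) := by
      have h3 := Real.log_le_sub_one_of_pos hsq
      have h4 : log q = 2 * log (sqrt q) := by rw [Real.log_sqrt q0.le]; ring
      linarith
    have := mul_le_mul_of_nonneg_left h2 q0.le
    linarith
  have hc := card_simp0 d (Sk m d k) hd0
  have he : exp (-(2 * d * lamk m d k)) = (1 / (4 * exp 1 * q) ^ 2) ^ d := by
    rw [lamk, ← hq, show -(2 * d * log (4 * exp 1 * q)) = d * (-(2 * log (4 * exp 1 * q))) by ring,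
      Real.exp_nat_mul]
    congr 1
    rw [Real.exp_neg, one_div]
    congr 1
    rw [show (2 : ℝ) * log (4 * exp 1 * q) = (2 : ℕ) * log (4 * exp 1 * q) by norm_num,
      Real.exp_nat_mul, Real.exp_log (by positivity)]
  rw [he]
  have e1 : (2.7 : ℝ) ≤ exp 1 := by linarith [Real.exp_one_gt_d9]
  have hsq1 : 1 ≤ sqrt q := by rw [Real.one_le_sqrt]; exact q1
  calc ((simp0 d (Sk m d k)).card : ℝ) * (1 / (4 * exp 1 * q) ^ 2) ^ d
      ≤ (exp 1 * (2 * (q * sqrt q))) ^ d * (1 / (4 * exp 1 * q) ^ 2) ^ d := by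
        refine mul_le_mul_of_nonneg_right (hc.trans ?_) (by positivity)
        gcongr
    _ = (1 / (8 * exp 1 * sqrt q)) ^ d := by
        rw [← mul_pow]
        congr 1
        field_simp
        nlinarith [hss]
    _ ≤ (1 / (8 * exp 1 * sqrt q)) ^ 2 := by
        refine pow_le_pow_of_le_one (by positivity) ?_ hd
        rw [div_le_one (by positivity)]
        nlinarith
    _ = 1 / (64 * exp 1 ^ 2 * q) := by
        rw [div_pow, mul_pow, Real.sq_sqrt q0.le]; ring
    _ ≤ 1 / (400 * 2 ^ k) := by
        have p2 : (0 : ℝ) < 2 ^ k := by positivity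
        refine one_div_le_one_div_of_le (by positivity) ?_
        have : (400 : ℝ) ≤ 64 * exp 1 ^ 2 := by nlinarith
        exact mul_le_mul this q2 p2.le (by positivity)
    _ = _ := by rw [one_div_pow]; field_simp

/-- variance bound at level `k` -/
def vk (m d k : ℕ) : ℝ := 2 * (m : ℝ) ^ d / qk m d k

/-- threshold at level `k` -/
def tk (m d k : ℕ) : ℝ := 2 * sqrt (vk m d k * (2 * d * lamk m d k)) + 2 * (2 * d * lamk m d k)

lemma prob_bad (m d K : ℕ) (hd : 2 ≤ d) (hmd : d ≤ m) (ℓ : ℝ) (hℓ : 1 ≤ ℓ) :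
    (jitterMeasure m d).real (⋃ k ∈ Finset.range (K + 1), ⋃ n ∈ simp0 d (Sk m d k),
      {P | ℓ * tk m d k ≤ |jdisc m d P (chainSet m d k n)|}) ≤ 3.7 * (4 : ℝ) ^ (-ℓ) := by
  have hd0 : 0 < d := by omega
  have hm : 0 < m := by omega
  have hm' : (0 : ℝ) < m := by exact_mod_cast hm
  have hd' : (2 : ℝ) ≤ d := by exact_mod_cast hd
  have := jitter_prob m d hm
  have h4 : (0 : ℝ) < 4 ^ (-ℓ) := by positivity
  have single : ∀ k, ∀ n ∈ simp0 d (Sk m d k),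
      (jitterMeasure m d).real {P | ℓ * tk m d k ≤ |jdisc m d P (chainSet m d k n)|} ≤
      2 * (exp (-(2 * d * lamk m d k)) * (4 * (4 : ℝ) ^ (-ℓ))) := by
    intro k n _
    obtain ⟨h1, h2, h3⟩ := chainSet_prop m d k hd0 hmd n
    have q1 := one_le_qk m d k hd0 hmd
    have l1 := lamk_ge m d k hd0 hmd
    set R := 2 * d * lamk m d k with hR
    have R1 : 2.38 ≤ R := by rw [hR]; nlinarith
    have hv0 : 0 < vk m d k := by simp only [vk]; positivity
    have ht : 2 * sqrt (vk m d k * (ℓ * R)) + 2 * (ℓ * R) ≤ ℓ * tk m d k := by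
      have : sqrt (vk m d k * (ℓ * R)) ≤ ℓ * sqrt (vk m d k * R) := by
        rw [Real.sqrt_le_iff]
        refine ⟨by positivity, ?_⟩
        rw [mul_pow, Real.sq_sqrt (by positivity)]
        have h5 : 0 ≤ vk m d k * R := by positivity
        have h6 : ℓ ≤ ℓ ^ 2 := by nlinarith
        have h7 := mul_le_mul_of_nonneg_right h6 h5
        linarith
      simp only [tk, ← hR]
      nlinarith
    refine (disc_tail m d hm _ h1 h2 (vk m d k) hv0 h3 (ℓ * R) _ (by positivity) ht).trans ?_
    refine mul_le_mul_of_nonneg_left ?_ (by norm_num)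
    have e4 : 4 * (4 : ℝ) ^ (-ℓ) = exp (-((ℓ - 1) * log 4)) := by
      rw [Real.rpow_def_of_pos (by norm_num)]
      nth_rw 1 [← Real.exp_log (show (0 : ℝ) < 4 by norm_num)]
      rw [← Real.exp_add]; ring_nf
    rw [e4, ← Real.exp_add, Real.exp_le_exp]
    have l4 : log 4 ≤ 1.4 := by
      rw [show (4 : ℝ) = 2 ^ 2 by norm_num, Real.log_pow]
      have := Real.log_two_lt_d9
      push_cast
      linarith
    nlinarith
  have geo : ∑ k ∈ Finset.range (K + 1), ((1 : ℝ) / 2) ^ k ≤ 2 := sum_geometric_two_le _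
  calc _ ≤ ∑ k ∈ Finset.range (K + 1), (jitterMeasure m d).real (⋃ n ∈ simp0 d (Sk m d k),
      {P | ℓ * tk m d k ≤ |jdisc m d P (chainSet m d k n)|}) := measureReal_biUnion_finset_le _ _
    _ ≤ ∑ k ∈ Finset.range (K + 1), ∑ n ∈ simp0 d (Sk m d k), (jitterMeasure m d).real
      {P | ℓ * tk m d k ≤ |jdisc m d P (chainSet m d k n)|} :=
        Finset.sum_le_sum fun k _ => measureReal_biUnion_finset_le _ _
    _ ≤ ∑ k ∈ Finset.range (K + 1), ∑ n ∈ simp0 d (Sk m d k),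
        2 * (exp (-(2 * d * lamk m d k)) * (4 * (4 : ℝ) ^ (-ℓ))) :=
        Finset.sum_le_sum fun k _ => Finset.sum_le_sum fun n hn => single k n hn
    _ = ∑ k ∈ Finset.range (K + 1), (((simp0 d (Sk m d k)).card : ℝ) *
        exp (-(2 * d * lamk m d k))) * (8 * (4 : ℝ) ^ (-ℓ)) := by
        refine Finset.sum_congr rfl fun k _ => ?_
        rw [Finset.sum_const, nsmul_eq_mul]; ring
    _ ≤ ∑ k ∈ Finset.range (K + 1), (1 / 400 * (1 / 2) ^ k) * (8 * (4 : ℝ) ^ (-ℓ)) :=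
        Finset.sum_le_sum fun k _ =>
          mul_le_mul_of_nonneg_right (count_exp m d k hd hmd) (by positivity)
    _ = (∑ k ∈ Finset.range (K + 1), ((1 : ℝ) / 2) ^ k) * (1 / 50 * (4 : ℝ) ^ (-ℓ)) := by
        rw [Finset.sum_mul]
        refine Finset.sum_congr rfl fun k _ => ?_
        ring
    _ ≤ 2 * (1 / 50 * (4 : ℝ) ^ (-ℓ)) := mul_le_mul_of_nonneg_right geo (by positivity)
    _ ≤ _ := by linarith

lemma geo_sum (r : ℝ) (hr0 : 0 < r) (hr : r ≤ 0.7072) (K : ℕ) :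
    ∑ k ∈ Finset.range (K + 1), r ^ k * (1 + 0.15 * k) ≤ 4.7 - r ^ K * (3.7 + 0.37 * K) := by
  induction K with
  | zero => norm_num
  | succ K ih =>
    rw [Finset.sum_range_succ]
    have hp : 0 < r ^ K := pow_pos hr0 K
    have hK : (0 : ℝ) ≤ K := Nat.cast_nonneg K
    have h1 : r * (5.22 + 0.52 * K) ≤ 3.7 + 0.37 * K := by nlinarith
    have h2 := mul_le_mul_of_nonneg_left h1 hp.le
    rw [pow_succ]
    push_cast
    nlinarith

lemma sq_le_pow (K : ℕ) : 4 * (K + 1) ^ 2 ≤ 9 * 2 ^ K := by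
  induction K using Nat.strong_induction_on with
  | _ K ih =>
    match K with
    | 0 => norm_num
    | 1 => norm_num
    | 2 => norm_num
    | K + 3 =>
      have := ih (K + 2) (by omega)
      have h2 : 2 ^ (K + 3) = 2 * 2 ^ (K + 2) := by ring
      have h3 : (K + 3 + 1) ^ 2 ≤ 2 * (K + 2 + 1) ^ 2 := by ring_nf; omega
      rw [h2]
      linarith

set_option maxHeartbeats 800000 in
lemma tk_sum (m d K : ℕ) (hd : 2 ≤ d) (hmd : d ≤ m) (B : ℝ) (hB1 : 1 ≤ B)
    (hB : B ^ 2 = (m : ℝ) ^ d / m) (hBm : (m : ℝ) ≤ B ^ 2) (hK : 2 ^ K ≤ B) :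
    ∑ k ∈ Finset.range (K + 1), tk m d k ≤ d * B * (27.6 * sqrt (lamk m d 0) + 6.4) := by
  have hd0 : 0 < d := by omega
  have hm : 0 < m := by omega
  have hm' : (0 : ℝ) < m := by exact_mod_cast hm
  have hd' : (2 : ℝ) ≤ d := by exact_mod_cast hd
  have l0 := lamk_zero_ge m d hd0 hmd
  set Λ := lamk m d 0 with hΛ
  set s := sqrt Λ with hs
  have hs0 : 0 ≤ s := sqrt_nonneg _
  have hss : s ^ 2 = Λ := Real.sq_sqrt (by linarith)
  have ln2 := Real.log_two_lt_d9
  have ln2' := Real.log_two_gt_d9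
  set r : ℝ := sqrt 2 / 2 with hr
  have hr2 : r ^ 2 = 1 / 2 := by rw [hr, div_pow, Real.sq_sqrt (by norm_num)]; norm_num
  have hr0 : 0 < r := by positivity
  have hr1 : r ≤ 0.7072 := by nlinarith
  have hgeo := geo_sum r hr0 hr1 K
  have hΛB : Λ ≤ 2 * B := by
    have h1 : 4 * exp 1 * qk m d 0 ≤ 2 * exp 1 * B ^ 2 := by
      have : qk m d 0 ≤ B ^ 2 / 2 := by
        simp only [qk, pow_zero, one_mul]
        rw [div_le_div_iff₀ (by linarith) (by norm_num)]
        nlinarith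
      nlinarith [exp_pos 1]
    have q1 := one_le_qk m d 0 hd0 hmd
    have h2 := Real.log_le_log (by positivity) h1
    rw [Real.log_mul (x := 2 * exp 1) (by positivity) (by positivity),
      Real.log_mul (x := 2) (by norm_num) (by positivity),
      Real.log_exp, Real.log_pow] at h2
    have h3 := Real.log_le_sub_one_of_pos (show 0 < B by linarith)
    rw [hΛ, lamk]
    push_cast at h2
    linarith
  have hKs : 4 * ((K : ℝ) + 1) ^ 2 ≤ 9 * B := by
    have : (4 * ((K : ℝ) + 1) ^ 2) ≤ 9 * 2 ^ K := by exact_mod_cast sq_le_pow K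
    linarith
  have hK0 : (0 : ℝ) ≤ K := Nat.cast_nonneg K
  have hKsB : ((K : ℝ) + 1) * s ≤ 2.2 * B := by
    refine abs_le_of_sq_le_sq' ?_ (by linarith) |>.2
    rw [mul_pow, hss]
    nlinarith [mul_le_mul hKs hΛB (by linarith) (by linarith)]
  have term : ∀ k ∈ Finset.range (K + 1), tk m d k ≤
      4 * d * B * s * (r ^ k * (1 + 0.15 * k)) + 4 * d * (Λ + 0.7 * K) := by
    intro k hk
    have hkK : (k : ℝ) ≤ K := by
      have : k ≤ K := by rw [Finset.mem_range] at hk; omega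
      exact_mod_cast this
    have hk0 : (0 : ℝ) ≤ k := Nat.cast_nonneg k
    have hl := lamk_eq m d k hd0 hmd
    rw [← hΛ] at hl
    have p2 : (0 : ℝ) < 2 ^ k := by positivity
    have hrk : (r ^ k) ^ 2 = 1 / 2 ^ k := by
      rw [← pow_mul, mul_comm, pow_mul, hr2, one_div_pow]
    have hv : vk m d k * (2 * d * lamk m d k) = (2 * d * B) ^ 2 * ((1 / 2 ^ k) * lamk m d k) := by
      simp only [vk, qk]
      rw [mul_pow, hB]
      field_simp
    have hsq : sqrt (vk m d k * (2 * d * lamk m d k)) ≤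
        2 * d * B * (r ^ k * s * (1 + 0.15 * k)) := by
      rw [Real.sqrt_le_iff]
      refine ⟨by positivity, ?_⟩
      rw [hv, mul_pow (2 * (d : ℝ) * B)]
      refine mul_le_mul_of_nonneg_left ?_ (by positivity)
      rw [mul_pow, mul_pow, hrk, hss, mul_assoc]
      refine mul_le_mul_of_nonneg_left ?_ (by positivity)
      rw [hl]
      have u1 : log 2 ≤ 0.3 * Λ := by linarith
      have u2 := mul_le_mul_of_nonneg_left u1 hk0
      have u3 := mul_nonneg (sq_nonneg (k : ℝ)) (show 0 ≤ Λ by linarith)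
      linarith
    have hlin : lamk m d k ≤ Λ + 0.7 * K := by
      have u1 := mul_le_mul hkK (show log 2 ≤ 0.7 by linarith) (by linarith) hK0
      linarith
    simp only [tk]
    have h8 := mul_le_mul_of_nonneg_left hlin (show 0 ≤ 4 * (d : ℝ) by linarith)
    have h9 : 2 * (2 * d * B * (r ^ k * s * (1 + 0.15 * k))) =
        4 * d * B * s * (r ^ k * (1 + 0.15 * k)) := by ring
    linarith
  refine (Finset.sum_le_sum term).trans ?_
  rw [Finset.sum_add_distrib, ← Finset.mul_sum, Finset.sum_const, Finset.card_range, nsmul_eq_mul]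
  push_cast
  have hg2 : ∑ k ∈ Finset.range (K + 1), r ^ k * (1 + 0.15 * k) ≤ 4.7 := by
    have : 0 ≤ r ^ K * (3.7 + 0.37 * K) := by positivity
    linarith
  have g1 := mul_le_mul_of_nonneg_left hg2 (show 0 ≤ 4 * d * B * s by positivity)
  have g2 : ((K : ℝ) + 1) * (Λ + 0.7 * K) ≤ 2.2 * B * s + 1.6 * B := by
    have a1 : ((K : ℝ) + 1) * Λ ≤ 2.2 * B * s := by
      rw [← hss]
      have := mul_le_mul_of_nonneg_right hKsB hs0
      linarith
    have a2 : ((K : ℝ) + 1) * (0.7 * K) ≤ 1.6 * B := by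
      have : ((K : ℝ) + 1) * K ≤ (K + 1) ^ 2 := by linarith
      linarith
    linarith
  have g3 := mul_le_mul_of_nonneg_left g2 (show 0 ≤ 4 * (d : ℝ) by linarith)
  linarith

lemma C_ge (C : ℝ)
    (hC : C = (2 : ℝ) ^ ((23 : ℝ) / 12) * Real.exp (1 / 6) / Real.sqrt (Real.log 2)) :
    5 ≤ C := by
  have h1 : (3.7 : ℝ) ≤ 2 ^ ((23 : ℝ) / 12) := by
    have e : ((2 : ℝ) ^ ((23 : ℝ) / 12)) ^ 12 = 2 ^ 23 := by
      rw [← Real.rpow_natCast, ← Real.rpow_mul (by norm_num), ← Real.rpow_natCast]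
      norm_num
    refine le_of_pow_le_pow_left₀ (n := 12) (by norm_num) (by positivity) ?_
    rw [e]; norm_num
  have h2 : (1.16 : ℝ) ≤ exp (1 / 6) := by
    have := Real.add_one_le_exp (1 / 6 : ℝ)
    norm_num at this ⊢
    linarith
  have h3 : sqrt (log 2) ≤ 0.84 := by
    rw [Real.sqrt_le_iff]
    refine ⟨by norm_num, ?_⟩
    have := Real.log_two_lt_d9
    norm_num at this ⊢
    linarith
  have h4 : 0 < sqrt (log 2) := Real.sqrt_pos.2 (Real.log_pos (by norm_num))
  rw [hC, le_div_iff₀ h4]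
  nlinarith

/-- Tail bound for the star discrepancy of jittered sampling (key estimate in the proof of the
upper bound): with `C = 2^(23/12)·e^(1/6)/√(ln 2)`, `K = ⌊((d−1)/2)·log₂ m⌋`,
`δ_K = 2^(−K)·d/m` and
`D = 2·C·d·√(N/m)·(5(1 + √2/2)·√(2 ln 2) + √(ln(4e·m/d))·√2/(√2 − 1))`, we have
`Pr[D*(P) ≥ ℓ·D + N·δ_K] ≤ 3.7·4^(−ℓ)` for all real `ℓ ≥ 1`. -/
theorem jittered_sampling_tail_bound (m d : ℕ) (hd : 2 ≤ d) (hmd : d ≤ m)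
    (C : ℝ) (hC : C = (2 : ℝ) ^ ((23 : ℝ) / 12) * Real.exp (1 / 6) / Real.sqrt (Real.log 2))
    (K : ℕ) (hK : K = ⌊((d : ℝ) - 1) / 2 * Real.logb 2 m⌋₊)
    (δK : ℝ) (hδK : δK = ((2 : ℝ) ^ K)⁻¹ * ((d : ℝ) / m))
    (D : ℝ) (hD : D = 2 * C * d * Real.sqrt ((m : ℝ) ^ d / m) *
      (5 * (1 + Real.sqrt 2 / 2) * Real.sqrt (2 * Real.log 2) +
        Real.sqrt (Real.log (4 * Real.exp 1 * m / d)) * Real.sqrt 2 / (Real.sqrt 2 - 1))) :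
    ∀ ℓ : ℝ, 1 ≤ ℓ →
      jitterMeasure m d {P | ℓ * D + (m : ℝ) ^ (d : ℕ) * δK ≤ starDisc m d P}
        ≤ ENNReal.ofReal (3.7 * (4 : ℝ) ^ (-ℓ)) := by
  intro ℓ hℓ
  have hd0 : 0 < d := by omega
  have hm : 0 < m := by omega
  have hm' : (1 : ℝ) ≤ m := by exact_mod_cast hm
  have hd' : (2 : ℝ) ≤ d := by exact_mod_cast hd
  have hprob := jitter_prob m d hm
  have hC5 := C_ge C hC
  have hδ0 : 0 ≤ (m : ℝ) ^ d * δK := by rw [hδK]; positivity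
  set B := sqrt ((m : ℝ) ^ d / m) with hBdef
  have hB : B ^ 2 = (m : ℝ) ^ d / m := Real.sq_sqrt (by positivity)
  have hBm : (m : ℝ) ≤ B ^ 2 := by
    rw [hB, le_div_iff₀ (by linarith), ← sq]
    exact pow_le_pow_right₀ hm' hd
  have hB0 : 0 ≤ B := sqrt_nonneg _
  have hB1 : 1 ≤ B := by nlinarith
  obtain ⟨K', hK1, hK2⟩ := exists_nat_pow_near hB1 (one_lt_two (α := ℝ))
  have hsum := tk_sum m d K' hd hmd B hB1 hB hBm hK1
  have hΛ : lamk m d 0 = log (4 * exp 1 * m / d) := by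
    simp only [lamk, qk]; congr 1; ring
  rw [← hΛ] at hD
  set s := sqrt (lamk m d 0) with hs
  have hs0 : 0 ≤ s := sqrt_nonneg _
  have hround : 2 * ((m : ℝ) ^ d / qk m d K') ≤ 4 * d * B := by
    have e : (m : ℝ) ^ d / qk m d K' = d * B ^ 2 / 2 ^ K' := by
      rw [hB]; simp only [qk]; field_simp
    rw [e, ← mul_div_assoc, div_le_iff₀ (by positivity)]
    rw [pow_succ] at hK2
    have : 0 ≤ d * B := by positivity
    nlinarith
  have hDbig : d * B * (27.6 * s + 6.4) + 4 * d * B < D := by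
    have s2 : (1.4 : ℝ) ≤ sqrt 2 := Real.le_sqrt_of_sq_le (by norm_num)
    have s2' : sqrt 2 ≤ 1.42 := Real.sqrt_le_iff.2 ⟨by norm_num, by norm_num⟩
    have s3 : (1 : ℝ) ≤ sqrt (2 * log 2) := by
      refine Real.le_sqrt_of_sq_le ?_
      have := Real.log_two_gt_d9
      linarith
    have a1 : (8 : ℝ) ≤ 5 * (1 + sqrt 2 / 2) * sqrt (2 * log 2) := by nlinarith
    have a2 : 3.3 * s ≤ s * sqrt 2 / (sqrt 2 - 1) := by
      rw [le_div_iff₀ (by linarith)]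
      nlinarith
    have hdB : 0 < d * B := by positivity
    rw [hD]
    have a3 : 8 + 3.3 * s ≤ 5 * (1 + sqrt 2 / 2) * sqrt (2 * log 2) + s * sqrt 2 / (sqrt 2 - 1) := by
      linarith
    have a4 : 10 * (d * B) * (8 + 3.3 * s) ≤ 2 * C * d * B *
        (5 * (1 + sqrt 2 / 2) * sqrt (2 * log 2) + s * sqrt 2 / (sqrt 2 - 1)) := by
      refine mul_le_mul ?_ a3 (by positivity) (by positivity)
      nlinarith
    refine lt_of_lt_of_le ?_ a4
    have := mul_nonneg hdB.le hs0
    nlinarith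
  have hsub : {P | ℓ * D + (m : ℝ) ^ (d : ℕ) * δK ≤ starDisc m d P} ⊆
      ⋃ k ∈ Finset.range (K' + 1), ⋃ n ∈ simp0 d (Sk m d k),
      {P | ℓ * tk m d k ≤ |jdisc m d P (chainSet m d k n)|} := by
    intro P hP
    by_contra hcon
    simp only [Set.mem_iUnion, Set.mem_ofPred_eq, not_exists, not_le, Finset.mem_range] at hcon hP
    have ht0 : ∀ k, 0 ≤ ℓ * tk m d k := fun k => by
      have := lamk_ge m d k hd0 hmd
      simp only [tk]; positivity
    have hchain := chain_bound m d K' P (fun k => ℓ * tk m d k) ht0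
      (fun k hk n hn => (hcon k (by omega) n hn).le) K' le_rfl
    have hT0 : 0 ≤ ∑ j ∈ Finset.range (K' + 1), ℓ * tk m d j :=
      Finset.sum_nonneg fun j _ => ht0 j
    have q1 := one_le_qk m d K' hd0 hmd
    have hfin : starDisc m d P ≤ ∑ j ∈ Finset.range (K' + 1), ℓ * tk m d j +
        2 * ((m : ℝ) ^ d / qk m d K') := by
      refine Real.iSup_le (fun y => ?_) (by positivity)
      exact final_all m d K' hd0 hmd P _ hT0 hchain y.1 (fun i => (y.2 i).1)
        fun i => (y.2 i).2.le
    rw [← Finset.mul_sum] at hfin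
    have hdB : 0 ≤ 4 * d * B := by positivity
    have z1 := mul_le_mul_of_nonneg_left hsum (show 0 ≤ ℓ by linarith)
    have z2 := mul_lt_mul_of_pos_left hDbig (show 0 < ℓ by linarith)
    have z3 := mul_le_mul_of_nonneg_right hℓ hdB
    linarith
  have hbad := prob_bad m d K' hd hmd ℓ hℓ
  refine (measure_mono hsub).trans ?_
  rw [← ENNReal.ofReal_toReal (measure_ne_top (jitterMeasure m d) _)]
  exact ENNReal.ofReal_le_ofReal hbad
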